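/- Suppose the item set M is partitioned into pairwise disjoint good-minimal meta-goods M_1,…,M_ℓ with pairwise disjoint supporter sets, a set X of subjective goods (singletons), and a set Ẑ of objective chores with 1 ≤ |Ẑ| ≤ n−1, such that for every objective chore c ∈ Ẑ, every agent i, and every subcollection S of X ∪ {M_1,…,M_ℓ}, it holds that u_i({c} ∪ ⋃S) < 0. Then there exists an allocation of M that is both EF1 and envy-freeable. -/

import Mathlib

/-!
By Halpern and Shah, an allocation is envy-freeable as soon as no permutation of its bundles among
the agents increases total utility; the payments are maximal weights of simple paths in the envy
graph. So it suffices to find an EF1 allocation with this rearrangement property.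

Every bundle (a good of `X` or a meta-good) is handed out as a single entity. First give the chores
to distinct agents and attach some of the entities to them so that total utility is maximal. Then
every agent holding a chore values each unattached entity at most zero. Distribute the unattached
entities by repeated maximum weight matching, which gives EF1 at the level of entities; since a
meta-good is good-minimal, one of its items is worth at least as much as the whole, so EF1 holds at
the level of items. An agent holding a chore envies nobody once that chore is removed, and nobody
envies such an agent because no bundle containing a chore has positive value.
-/

open Finset Function

namespace FairDivision

variable {ι κ I R : Type*}

/-! ### Payments from path weights -/

section Payments

section Walks

variable [AddMonoid R]

/-- Total weight of the walk that starts at the given vertex and visits the listed vertices in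
order. -/
def walkWeight (w : ι → ι → R) : ι → List ι → R
  | _, [] => 0
  | a, b :: l => w a b + walkWeight w b l

theorem walkWeight_append_cons (w : ι → ι → R) (a b : ι) (l₁ l₂ : List ι) :
    walkWeight w a (l₁ ++ b :: l₂) = walkWeight w a (l₁ ++ [b]) + walkWeight w b l₂ := by
  induction l₁ generalizing a with
  | nil => simp [walkWeight]
  | cons c l₁ ih => simp [walkWeight, ih, add_assoc]

theorem walkWeight_concat_eq_sum_zipWith (w : ι → ι → R) (a b : ι) (l : List ι) :
    walkWeight w a (l ++ [b]) = (List.zipWith w (a :: l) (l ++ [b])).sum := by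
  induction l generalizing a with
  | nil => simp [walkWeight]
  | cons c l ih => simp [walkWeight, ih]

theorem map_formPerm_cons [DecidableEq ι] {a : ι} {l : List ι} (hl : (a :: l).Nodup) :
    (a :: l).map (List.formPerm (a :: l)) = l ++ [a] := by
  have hrotate : l ++ [a] = (a :: l).rotate 1 := by simp
  rw [hrotate]
  refine List.ext_getElem (by simp) fun k _ _ => ?_
  rw [List.getElem_map, List.formPerm_apply_getElem _ hl, List.getElem_rotate]

theorem exists_max_walkWeight [Finite ι] [LinearOrder R] (w : ι → ι → R) (i : ι) :
    ∃ l, (i :: l).Nodup ∧ ∀ l', (i :: l').Nodup → walkWeight w i l' ≤ walkWeight w i l := by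
  classical
  have := Fintype.ofFinite ι
  have : Finite {l : List ι // (i :: l).Nodup} :=
    Finite.of_injective (fun l => (⟨i :: l, l.2⟩ : {l : List ι // l.Nodup}))
      fun l l' h => by simpa [Subtype.ext_iff] using h
  have : Nonempty {l : List ι // (i :: l).Nodup} := ⟨⟨[], by simp⟩⟩
  obtain ⟨l, hl⟩ := Finite.exists_max fun l : {l : List ι // (i :: l).Nodup} => walkWeight w i l
  exact ⟨l, l.2, fun l' hl' => hl ⟨l', hl'⟩⟩

end Walks

variable [AddCommGroup R] [LinearOrder R] [Fintype ι] {w : ι → ι → R}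

theorem walkWeight_cycle_nonpos (hdiag : ∀ i, w i i = 0)
    (hperm : ∀ σ : Equiv.Perm ι, ∑ i, w i (σ i) ≤ 0) {a : ι} {l : List ι} (hl : (a :: l).Nodup) :
    walkWeight w a (l ++ [a]) ≤ 0 := by
  classical
  set σ := List.formPerm (a :: l)
  calc walkWeight w a (l ++ [a])
      = (List.zipWith w (a :: l) ((a :: l).map σ)).sum := by
        rw [walkWeight_concat_eq_sum_zipWith, map_formPerm_cons hl]
    _ = ∑ i ∈ (a :: l).toFinset, w i (σ i) := by
        rw [List.zipWith_map_right, List.zipWith_self, List.sum_toFinset _ hl]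
    _ = ∑ i, w i (σ i) := by
        refine sum_subset (subset_univ _) fun i _ hi => ?_
        rw [List.formPerm_apply_of_notMem (by simpa using hi), hdiag]
    _ ≤ 0 := hperm σ

theorem exists_payments_of_perm_sum_nonpos [IsOrderedAddMonoid R] (hdiag : ∀ i, w i i = 0)
    (hperm : ∀ σ : Equiv.Perm ι, ∑ i, w i (σ i) ≤ 0) :
    ∃ p : ι → R, (∀ i, 0 ≤ p i) ∧ ∀ i j, w i j + p j ≤ p i := by
  choose path hnodup hmax using exists_max_walkWeight w
  refine ⟨fun i => walkWeight w i (path i), fun i => hmax i [] (by simp), fun i j => ?_⟩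
  by_cases hi : i ∈ j :: path j
  · -- The walk `i, j, …, i, …` is a closed walk followed by a simple path from `i`.
    obtain ⟨l₁, l₂, hsplit⟩ := List.append_of_mem hi
    have hsplit_nodup : (l₁ ++ i :: l₂).Nodup := hsplit ▸ hnodup j
    have hcycle : walkWeight w i (l₁ ++ [i]) ≤ 0 :=
      walkWeight_cycle_nonpos hdiag hperm (List.nodup_middle.1 hsplit_nodup).of_append_left
    calc w i j + walkWeight w j (path j)
        = walkWeight w i (l₁ ++ [i]) + walkWeight w i l₂ := by
          rw [← walkWeight_append_cons, ← hsplit, walkWeight]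
      _ ≤ walkWeight w i l₂ := by grind
      _ ≤ walkWeight w i (path i) := hmax i l₂ hsplit_nodup.of_append_right
  · exact hmax i (j :: path j) (List.nodup_cons.2 ⟨hi, hnodup j⟩)

end Payments

/-! ### Assigning entities by repeated maximum weight matching -/

section BundleValue

variable [AddCommMonoid R] {S Y : Finset κ}

/-- The value to agent `i` of the entities of `Y` that the assignment `f` hands to agent `j`. -/
def bundleValue [DecidableEq ι] (v : ι → κ → R) (Y : Finset κ) (f : κ → ι) (i j : ι) : R :=
  ∑ e ∈ Y with f e = j, v i e

theorem bundleValue_self [DecidableEq ι] (v : ι → κ → R) (Y : Finset κ) (f : κ → ι) (i : ι) :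
    bundleValue v Y f i i = ∑ e ∈ Y with f e = i, v (f e) e :=
  sum_congr rfl fun _ he => by rw [(mem_filter.1 he).2]

theorem sum_comp_piecewise [DecidableEq κ] (hS : S ⊆ Y) (φ : ι → κ → R) (f f' : κ → ι) :
    ∑ e ∈ Y, φ (S.piecewise f f' e) e = ∑ e ∈ S, φ (f e) e + ∑ e ∈ Y \ S, φ (f' e) e := by
  rw [← sum_sdiff hS, add_comm]
  congr 1
  · exact sum_congr rfl fun e he => by rw [piecewise_eq_of_mem _ _ _ he]
  · exact sum_congr rfl fun e he => by rw [piecewise_eq_of_notMem _ _ _ (mem_sdiff.1 he).2]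

theorem bundleValue_piecewise [DecidableEq ι] [DecidableEq κ] (hS : S ⊆ Y)
    (v : ι → κ → R) (f f' : κ → ι) (i j : ι) :
    bundleValue v Y (S.piecewise f f') i j =
      bundleValue v S f i j + bundleValue v (Y \ S) f' i j := by
  simpa only [bundleValue, sum_filter] using
    sum_comp_piecewise hS (fun k e => if k = j then v i e else 0) f f'

theorem bundleValue_eq_of_injOn [DecidableEq ι] (v : ι → κ → R) {f : κ → ι} (hf : Set.InjOn f S)
    {e : κ} (he : e ∈ S) (i : ι) : bundleValue v S f i (f e) = v i e := by
  have hsingle : {x ∈ S | f x = f e} = {e} := by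
    ext x
    rw [mem_filter, mem_singleton]
    exact ⟨fun hx => hf hx.1 he hx.2, by rintro rfl; exact ⟨he, rfl⟩⟩
  rw [bundleValue, hsingle, sum_singleton]

end BundleValue

section Matching

variable [AddCommGroup R] [LinearOrder R]

variable {v : ι → κ → R} {S Y : Finset κ} {f : κ → ι}

/-- A maximum weight matching between agents and entities of `Y`: the matched entities are `S`, and
`e ∈ S` is matched to `f e`. The values of `f` off `S` are irrelevant. -/
structure IsMaxWeightMatching (v : ι → κ → R) (Y S : Finset κ) (f : κ → ι) : Prop where
  subset : S ⊆ Y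
  injOn : Set.InjOn f S
  weight_le : ∀ S' ⊆ Y, ∀ f' : κ → ι, Set.InjOn f' S' →
    ∑ e ∈ S', v (f' e) e ≤ ∑ e ∈ S, v (f e) e

theorem exists_isMaxWeightMatching [Finite ι] [Finite κ] [Nonempty (κ → ι)] (v : ι → κ → R)
    (Y : Finset κ) : ∃ S f, IsMaxWeightMatching v Y S f := by
  let Matching := {m : Finset κ × (κ → ι) // m.1 ⊆ Y ∧ Set.InjOn m.2 m.1}
  have : Nonempty Matching := ⟨⟨(∅, Classical.arbitrary _), by simp⟩⟩
  obtain ⟨⟨⟨S, f⟩, hS, hf⟩, hmax⟩ :=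
    Finite.exists_max fun m : Matching => ∑ e ∈ m.1.1, v (m.1.2 e) e
  exact ⟨S, f, hS, hf, fun S' hS' f' hf' => hmax ⟨(S', f'), hS', hf'⟩⟩

namespace IsMaxWeightMatching

variable [IsOrderedAddMonoid R]

theorem nonneg (h : IsMaxWeightMatching v Y S f) : ∀ e ∈ S, 0 ≤ v (f e) e := by
  classical
  intro e he
  have hdrop := h.weight_le (S.erase e) ((erase_subset _ _).trans h.subset) f
    (h.injOn.mono (by simp))
  rw [sum_erase_eq_sub he] at hdrop
  grind

theorem le_bundleValue [DecidableEq ι] (h : IsMaxWeightMatching v Y S f) {e : κ} (heY : e ∈ Y)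
    (heS : e ∉ S) (i : ι) : v i e ≤ bundleValue v S f i i := by
  classical
  -- Rematch agent `i` to `e`.
  let S' := {x ∈ S | f x ≠ i}
  have heS' : e ∉ S' := fun he => heS (mem_filter.1 he).1
  have heq : ∀ x ∈ S', update f e i x = f x := fun x hx =>
    update_of_ne (ne_of_mem_of_not_mem hx heS') _ _
  have hinj : Set.InjOn (update f e i) (insert e S' : Finset κ) := by
    rw [coe_insert, Set.injOn_insert (mod_cast heS'), Set.EqOn.injOn_iff heq,
      Set.EqOn.image_eq heq, update_self]
    exact ⟨h.injOn.mono (coe_subset.2 (filter_subset _ _)), by simp [S']⟩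
  have hle := h.weight_le _
    (insert_subset heY ((filter_subset _ _).trans h.subset)) _ hinj
  rw [sum_insert heS', update_self, sum_congr rfl fun x hx => by rw [heq x hx],
    ← sum_filter_add_sum_filter_not S (f · = i), ← bundleValue_self] at hle
  exact le_of_add_le_add_right hle

end IsMaxWeightMatching

end Matching

section FairAssignment

variable [AddCommGroup R] [LinearOrder R]

variable [DecidableEq ι] {v : ι → κ → R} {S Y : Finset κ} {f f' : κ → ι}

/-- EF1 of agent `i` towards agent `j` at the level of entities, where only an entity of the envied
bundle may be removed. -/
def EF1Toward (v : ι → κ → R) (Y : Finset κ) (f : κ → ι) (i j : ι) : Prop :=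
  bundleValue v Y f i j ≤ bundleValue v Y f i i ∨
    ∃ e ∈ Y, f e = j ∧ bundleValue v Y f i j - v i e ≤ bundleValue v Y f i i

/-- The assignments of the entities `Y` produced by repeated maximum weight matching: every entity
goes to a supporter, no permutation of the agents raises the total value, and EF1 holds. -/
structure IsFairAssignment (v : ι → κ → R) (Y : Finset κ) (f : κ → ι) : Prop where
  nonneg : ∀ e ∈ Y, 0 ≤ v (f e) e
  sum_perm_le : ∀ τ : Equiv.Perm ι, ∑ e ∈ Y, v (τ (f e)) e ≤ ∑ e ∈ Y, v (f e) e
  ef1 : ∀ i j, EF1Toward v Y f i j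

variable [IsOrderedAddMonoid R]

theorem bundleValue_self_nonneg (h : ∀ e ∈ Y, 0 ≤ v (f e) e) (i : ι) :
    0 ≤ bundleValue v Y f i i := by
  rw [bundleValue_self]
  exact sum_nonneg fun e he => h e (mem_filter.1 he).1

theorem isFairAssignment_of_nonpos (hsupp : ∀ e ∈ Y, 0 ≤ v (f e) e)
    (hnonpos : ∀ e ∈ Y, ∀ i, v i e ≤ 0) : IsFairAssignment v Y f where
  nonneg := hsupp
  sum_perm_le _ := sum_le_sum fun e he => (hnonpos e he _).trans (hsupp e he)
  ef1 i _ := .inl <| (sum_nonpos fun e he => hnonpos e (mem_filter.1 he).1 i).trans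
    (bundleValue_self_nonneg hsupp i)

theorem IsMaxWeightMatching.isFairAssignment_piecewise [DecidableEq κ]
    (hS : IsMaxWeightMatching v Y S f) (hf' : IsFairAssignment v (Y \ S) f') :
    IsFairAssignment v Y (S.piecewise f f') where
  nonneg e he := by
    by_cases heS : e ∈ S
    · simpa [heS] using hS.nonneg e heS
    · simpa [heS] using hf'.nonneg e (mem_sdiff.2 ⟨he, heS⟩)
  sum_perm_le τ := by
    rw [sum_comp_piecewise hS.subset (fun k e => v (τ k) e), sum_comp_piecewise hS.subset v]
    exact add_le_add
      (hS.weight_le S hS.subset (τ ∘ f) (τ.injective.comp_injOn hS.injOn)) (hf'.sum_perm_le τ)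
  ef1 i j := by
    simp only [EF1Toward, bundleValue_piecewise hS.subset]
    -- The entity matched to `i` outweighs the one removed from the remaining bundle of `j`.
    have hrest : bundleValue v (Y \ S) f' i j ≤
        bundleValue v S f i i + bundleValue v (Y \ S) f' i i := by
      rcases hf'.ef1 i j with h | ⟨e, he, -, h⟩
      · exact le_add_of_nonneg_of_le (bundleValue_self_nonneg hS.nonneg i) h
      · obtain ⟨heY, heS⟩ := mem_sdiff.1 he
        exact (sub_le_iff_le_add.1 h).trans <| by
          rw [add_comm]
          gcongr
          exact hS.le_bundleValue heY heS i
    by_cases hj : ∃ e ∈ S, f e = j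
    · obtain ⟨e, he, rfl⟩ := hj
      refine .inr ⟨e, hS.subset he, by simp [he], ?_⟩
      rwa [bundleValue_eq_of_injOn v hS.injOn he, add_sub_cancel_left]
    · have hempty : bundleValue v S f i j = 0 :=
        sum_eq_zero fun e he => absurd ⟨e, mem_filter.1 he⟩ hj
      exact .inl (by rwa [hempty, zero_add])

theorem exists_isFairAssignment [Finite ι] [Finite κ] (hsupp : ∀ e, ∃ i, 0 ≤ v i e)
    (Y : Finset κ) : ∃ f, IsFairAssignment v Y f := by
  classical
  choose supporter hsupporter using hsupp
  have : Nonempty (κ → ι) := ⟨supporter⟩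
  induction Y using Finset.strongInduction with
  | H Y ih =>
    obtain ⟨S, f, hS⟩ := exists_isMaxWeightMatching v Y
    rcases S.eq_empty_or_nonempty with rfl | hne
    · refine ⟨supporter, isFairAssignment_of_nonpos (fun e _ => hsupporter e) fun e he i => ?_⟩
      simpa [bundleValue] using hS.le_bundleValue he (notMem_empty e) i
    · obtain ⟨f', hf'⟩ := ih (Y \ S) (sdiff_ssubset hS.subset hne)
      exact ⟨_, hS.isFairAssignment_piecewise hf'⟩

end FairAssignment

/-! ### Chores held by distinct agents -/

section Attachment

variable {C : Type*} [AddCommMonoid R]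

/-- The value of the entity `e` when it is attached to the chore `o`, held by the agent `h o`, or
to no chore if `o` is `none`. -/
def attachedValue (v : ι → κ → R) (h : C → ι) (e : κ) (o : Option C) : R :=
  o.elim 0 fun c => v (h c) e

theorem sum_elim_attachment [Fintype κ] (v : ι → κ → R) (h : C → ι) (f : κ → ι) (g : κ → Option C)
    (τ : ι → ι) :
    ∑ e, v (τ ((g e).elim (f e) h)) e =
      ∑ e, attachedValue v (τ ∘ h) e (g e) + ∑ e with g e = none, v (τ (f e)) e := by
  rw [sum_filter, ← sum_add_distrib]
  refine sum_congr rfl fun e _ => ?_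
  cases g e <;> simp [attachedValue]

theorem bundleValue_elim_attachment [Fintype κ] [DecidableEq ι] (v : ι → κ → R) (h : C → ι)
    (f : κ → ι) (g : κ → Option C) (i : ι) {j : ι} (hj : j ∉ Set.range h) :
    bundleValue v univ (fun e => (g e).elim (f e) h) i j =
      bundleValue v {e | g e = none} f i j := by
  rw [Set.mem_range, not_exists] at hj
  refine sum_congr ?_ fun _ _ => rfl
  ext e
  cases hg : g e <;> simp [hg, hj]

end Attachment

section Chores

variable {C : Type*} [AddCommGroup R] [LinearOrder R] [IsOrderedAddMonoid R]

theorem exists_optimal_attachment [Fintype C] [Finite ι] [Fintype κ] [Nonempty (C ↪ ι)]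
    (a : ι → C → R) (v : ι → κ → R) :
    ∃ (h : C ↪ ι) (g : κ → Option C),
      (∀ e o, attachedValue v h e o ≤ attachedValue v h e (g e)) ∧
      ∀ h' : C ↪ ι, ∑ c, a (h' c) c + ∑ e, attachedValue v h' e (g e) ≤
        ∑ c, a (h c) c + ∑ e, attachedValue v h e (g e) := by
  choose g hg using fun (h : C ↪ ι) (e : κ) => Finite.exists_max (attachedValue v h e)
  obtain ⟨h, hh⟩ := Finite.exists_max fun h : C ↪ ι =>
    ∑ c, a (h c) c + ∑ e, attachedValue v h e (g h e)
  refine ⟨h, g h, hg h, fun h' => le_trans ?_ (hh h')⟩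
  gcongr with e
  exact hg h' e (g h e)

/-- Assignments `h` of the chores to distinct agents and `f` of the entities that together are
fair: every entity goes to a supporter, chore holders want no entity held by the other agents, no
permutation of the agents raises the total value, and EF1 holds among agents without a chore. -/
structure IsFairChoreAssignment [Fintype C] [Fintype κ] [DecidableEq ι] (a : ι → C → R)
    (v : ι → κ → R) (h : C ↪ ι) (f : κ → ι) : Prop where
  nonneg : ∀ e, 0 ≤ v (f e) e
  nonpos : ∀ c e, f e ∉ Set.range h → v (h c) e ≤ 0
  sum_perm_le : ∀ τ : Equiv.Perm ι,
    ∑ c, a (τ (h c)) c + ∑ e, v (τ (f e)) e ≤ ∑ c, a (h c) c + ∑ e, v (f e) e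
  ef1 : ∀ i j, i ∉ Set.range h → j ∉ Set.range h → EF1Toward v univ f i j

theorem exists_isFairChoreAssignment [Fintype C] [Fintype κ] [Fintype ι] [DecidableEq ι]
    (hcard : Fintype.card C ≤ Fintype.card ι) (a : ι → C → R) {v : ι → κ → R}
    (hsupp : ∀ e, ∃ i, 0 ≤ v i e) :
    ∃ (h : C ↪ ι) (f : κ → ι), IsFairChoreAssignment a v h f := by
  classical
  have : Nonempty (C ↪ ι) := Embedding.nonempty_of_card_le hcard
  obtain ⟨h, g, hg, hmax⟩ := exists_optimal_attachment a v
  obtain ⟨f, hf⟩ := exists_isFairAssignment hsupp {e | g e = none}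
  refine ⟨h, fun e => (g e).elim (f e) h, ⟨fun e => ?_, fun c e he => ?_, fun τ => ?_, ?_⟩⟩
  · cases he : g e with
    | none => exact hf.nonneg e (by simpa using he)
    | some c => simpa [attachedValue, he] using hg e none
  · cases hge : g e with
    | none => simpa [attachedValue, hge] using hg e (some c)
    | some c' => exact absurd ⟨c', by simp [hge]⟩ he
  · have hτ := sum_elim_attachment v h f g τ
    have hid := sum_elim_attachment v h f g id
    simp only [id, id_comp] at hid
    rw [hτ, hid, ← add_assoc, ← add_assoc]
    exact add_le_add (hmax (h.trans τ.toEmbedding)) (hf.sum_perm_le τ)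
  · intro i j hi hj
    rw [EF1Toward, bundleValue_elim_attachment v h f g i hj,
      bundleValue_elim_attachment v h f g i hi]
    refine (hf.ef1 i j).imp_right fun ⟨e, he, hfe, hle⟩ => ⟨e, mem_univ e, ?_, hle⟩
    simp [(mem_filter.1 he).2, hfe]

end Chores

/-! ### Allocations of items -/

section Criteria

/-- A partition of the items into one (possibly empty) bundle per agent. -/
structure IsAllocation [Fintype ι] [Fintype I] [DecidableEq I] (A : ι → Finset I) : Prop where
  disjoint : Pairwise (Disjoint on A)
  biUnion_eq_univ : univ.biUnion A = univ

/-- A meta-good: some agent, called a supporter, values the set of items at least zero. -/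
def IsMetaGood [AddCommMonoid R] [LE R] (u : ι → I → R) (S : Finset I) : Prop :=
  ∃ i, 0 ≤ ∑ t ∈ S, u i t

/-- Good-minimality: an agent who loses an item that is a good for them values the rest of the set
at most zero. -/
def IsGoodMinimal [DecidableEq I] [AddCommMonoid R] [LE R] (u : ι → I → R) (S : Finset I) : Prop :=
  ∀ i, ∀ g ∈ S, 0 ≤ u i g → ∑ t ∈ S.erase g, u i t ≤ 0

/-- Envy-freeness up to one item, for goods and chores: the removed item may come from either
bundle. -/
def IsEF1 [DecidableEq I] [AddCommMonoid R] [LE R] (u : ι → I → R) (A : ι → Finset I) : Prop :=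
  ∀ i j, ∑ t ∈ A i, u i t ≥ ∑ t ∈ A j, u i t ∨
    ∃ t ∈ A i ∪ A j, ∑ s ∈ (A i).erase t, u i s ≥ ∑ s ∈ (A j).erase t, u i s

/-- Envy-freeability: nonnegative payments to the agents make the allocation envy-free. -/
def IsEnvyFreeable [AddCommMonoid R] [LE R] (u : ι → I → R) (A : ι → Finset I) : Prop :=
  ∃ p : ι → R, (∀ i, 0 ≤ p i) ∧
    ∀ i j, ∑ t ∈ A i, u i t + p i ≥ ∑ t ∈ A j, u i t + p j

variable [AddCommGroup R]

theorem isGoodMinimal_singleton [DecidableEq I] [Preorder R] (u : ι → I → R) (g : I) :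
    IsGoodMinimal u {g} := by
  intro i t ht _
  rw [mem_singleton.1 ht, erase_singleton, sum_empty]

theorem exists_erase_le_of_sub_le [DecidableEq I] [LE R] {x : I → R} {S T : Finset I}
    (hST : Disjoint S T) {t : I} (ht : t ∈ T) (h : ∑ s ∈ T, x s - x t ≤ ∑ s ∈ S, x s) :
    ∃ t ∈ S ∪ T, ∑ s ∈ S.erase t, x s ≥ ∑ s ∈ T.erase t, x s := by
  refine ⟨t, mem_union_right _ ht, ?_⟩
  rwa [erase_eq_of_notMem (disjoint_right.1 hST ht), sum_erase_eq_sub ht]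

theorem exists_erase_le_of_le_sub [DecidableEq I] [LE R] {x : I → R} {S T : Finset I}
    (hST : Disjoint S T) {t : I} (ht : t ∈ S) (h : ∑ s ∈ T, x s ≤ ∑ s ∈ S, x s - x t) :
    ∃ t ∈ S ∪ T, ∑ s ∈ S.erase t, x s ≥ ∑ s ∈ T.erase t, x s := by
  refine ⟨t, mem_union_left _ ht, ?_⟩
  rwa [erase_eq_of_notMem (disjoint_left.1 hST ht), sum_erase_eq_sub ht]

variable [LinearOrder R] [IsOrderedAddMonoid R]

theorem IsGoodMinimal.exists_sum_le [DecidableEq I] {u : ι → I → R} {S : Finset I}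
    (hS : IsGoodMinimal u S) {i : ι} (hpos : 0 < ∑ t ∈ S, u i t) :
    ∃ g ∈ S, ∑ t ∈ S, u i t ≤ u i g := by
  obtain ⟨g, hg, hgpos⟩ : ∃ g ∈ S, 0 < u i g := exists_lt_of_sum_lt (by simpa using hpos)
  have hrest := hS i g hg hgpos.le
  rw [sum_erase_eq_sub hg, sub_nonpos] at hrest
  exact ⟨g, hg, hrest⟩

theorem isEnvyFreeable_of_sum_perm_le [Fintype ι] {u : ι → I → R} {A : ι → Finset I}
    (h : ∀ σ : Equiv.Perm ι, ∑ i, ∑ t ∈ A (σ i), u i t ≤ ∑ i, ∑ t ∈ A i, u i t) :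
    IsEnvyFreeable u A := by
  obtain ⟨p, hp, henvy⟩ := exists_payments_of_perm_sum_nonpos
    (w := fun i j => ∑ t ∈ A j, u i t - ∑ t ∈ A i, u i t) (fun i => sub_self _)
    (fun σ => by rw [sum_sub_distrib]; exact sub_nonpos.2 (h σ))
  exact ⟨p, hp, fun i j => by have := henvy i j; grind⟩

end Criteria

section BundleUnion

variable [DecidableEq I] [DecidableEq ι] {β : Type*} [Fintype β] {B : β → Finset I} {f : β → ι}

/-- The allocation of items that hands every item of the set `B b` to the agent `f b`. -/
def bundleUnion (B : β → Finset I) (f : β → ι) (i : ι) : Finset I :=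
  ({b | f b = i} : Finset β).biUnion B

theorem mem_bundleUnion {i : ι} {t : I} : t ∈ bundleUnion B f i ↔ ∃ b, f b = i ∧ t ∈ B b := by
  simp [bundleUnion]

theorem pairwise_disjoint_bundleUnion (hB : Pairwise (Disjoint on B)) (f : β → ι) :
    Pairwise (Disjoint on bundleUnion B f) := by
  refine fun i j hij => disjoint_left.2 fun t hi hj => hij ?_
  obtain ⟨b, rfl, hb⟩ := mem_bundleUnion.1 hi
  obtain ⟨b', rfl, hb'⟩ := mem_bundleUnion.1 hj
  rw [hB.eq (not_disjoint_iff.2 ⟨t, hb, hb'⟩)]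

theorem isAllocation_bundleUnion [Fintype ι] [Fintype I] (hB : Pairwise (Disjoint on B))
    (hcover : ∀ t, ∃ b, t ∈ B b) (f : β → ι) : IsAllocation (bundleUnion B f) where
  disjoint := pairwise_disjoint_bundleUnion hB f
  biUnion_eq_univ := by
    refine eq_univ_of_forall fun t => ?_
    obtain ⟨b, hb⟩ := hcover t
    exact mem_biUnion.2 ⟨f b, mem_univ _, mem_bundleUnion.2 ⟨b, rfl, hb⟩⟩

variable [AddCommMonoid R]

theorem sum_bundleUnion (hB : Pairwise (Disjoint on B)) (f : β → ι) (u : ι → I → R) (i j : ι) :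
    ∑ t ∈ bundleUnion B f j, u i t = bundleValue (fun i b => ∑ t ∈ B b, u i t) univ f i j :=
  sum_biUnion (hB.set_pairwise _)

theorem sum_sum_perm_bundleUnion [Fintype ι] (hB : Pairwise (Disjoint on B)) (f : β → ι)
    (u : ι → I → R) (σ : Equiv.Perm ι) :
    ∑ i, ∑ t ∈ bundleUnion B f (σ i), u i t = ∑ b, ∑ t ∈ B b, u (σ.symm (f b)) t := by
  simp only [sum_bundleUnion hB, bundleValue, ← Equiv.symm_apply_eq]
  rw [← sum_fiberwise univ fun b => σ.symm (f b)]
  exact sum_congr rfl fun i _ => sum_congr rfl fun b hb => by rw [(mem_filter.1 hb).2]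

end BundleUnion

section Parcels

variable {Z : Finset I} {B : κ → Finset I}

/-- The sets of items that are handed out whole: the single items of `Z` and the sets `B k`. -/
def parcels (Z : Finset I) (B : κ → Finset I) : Z ⊕ κ → Finset I :=
  Sum.elim (fun c => {c.1}) B

theorem pairwise_disjoint_parcels (hB : Pairwise (Disjoint on B)) (hBZ : ∀ k, Disjoint (B k) Z) :
    Pairwise (Disjoint on parcels Z B) := by
  rintro (c | k) (c' | k') hne
  · exact disjoint_singleton.2 fun h => hne (congrArg _ (Subtype.ext h))
  · exact disjoint_singleton_left.2 (disjoint_right.1 (hBZ k') c.2)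
  · exact disjoint_singleton_right.2 (disjoint_right.1 (hBZ k) c'.2)
  · exact hB fun h => hne (congrArg _ h)

variable [DecidableEq I] [DecidableEq ι] [Fintype κ]

theorem bundleUnion_parcels_apply (h : Z ↪ ι) (f : κ → ι) (c : Z) :
    bundleUnion (parcels Z B) (Sum.elim h f) (h c) = insert c.1 (bundleUnion B f (h c)) := by
  ext t
  simp [mem_bundleUnion, parcels]

theorem bundleUnion_parcels_of_notMem_range (h : Z ↪ ι) (f : κ → ι) {j : ι}
    (hj : j ∉ Set.range h) :
    bundleUnion (parcels Z B) (Sum.elim h f) j = bundleUnion B f j := by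
  ext t
  rw [Set.mem_range, not_exists] at hj
  simp [mem_bundleUnion, parcels, hj]

end Parcels

section MainArgument

variable [DecidableEq I] [Fintype κ] [AddCommGroup R] [LinearOrder R] [IsOrderedAddMonoid R]
  {u : ι → I → R} {Z : Finset I} {B : κ → Finset I}

namespace IsFairChoreAssignment

variable [DecidableEq ι] {h : Z ↪ ι} {f : κ → ι}

theorem isEnvyFreeable [Finite ι]
    (hfair : IsFairChoreAssignment (fun i (c : Z) => u i c) (fun i k => ∑ t ∈ B k, u i t) h f)
    (hB : Pairwise (Disjoint on B)) (hBZ : ∀ k, Disjoint (B k) Z) :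
    IsEnvyFreeable u (bundleUnion (parcels Z B) (Sum.elim h f)) := by
  have := Fintype.ofFinite ι
  have hparcels := pairwise_disjoint_parcels hB hBZ
  refine isEnvyFreeable_of_sum_perm_le fun σ => ?_
  have hid := sum_sum_perm_bundleUnion hparcels (Sum.elim h f) u (Equiv.refl ι)
  simp only [Equiv.refl_apply, Equiv.refl_symm] at hid
  rw [sum_sum_perm_bundleUnion hparcels, hid]
  simpa [parcels] using hfair.sum_perm_le σ.symm

theorem sum_own_nonneg
    (hfair : IsFairChoreAssignment (fun i (c : Z) => u i c) (fun i k => ∑ t ∈ B k, u i t) h f)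
    (hB : Pairwise (Disjoint on B)) (i : ι) : 0 ≤ ∑ t ∈ bundleUnion B f i, u i t := by
  rw [sum_bundleUnion hB]
  exact bundleValue_self_nonneg (fun k _ => hfair.nonneg k) i

theorem sum_holder_nonpos
    (hfair : IsFairChoreAssignment (fun i (c : Z) => u i c) (fun i k => ∑ t ∈ B k, u i t) h f)
    (hB : Pairwise (Disjoint on B)) (c : Z) {j : ι} (hj : j ∉ Set.range h) :
    ∑ t ∈ bundleUnion B f j, u (h c) t ≤ 0 := by
  rw [sum_bundleUnion hB]
  refine sum_nonpos fun k hk => hfair.nonpos c k ?_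
  rwa [(mem_filter.1 hk).2]

theorem ef1_bundleUnion
    (hfair : IsFairChoreAssignment (fun i (c : Z) => u i c) (fun i k => ∑ t ∈ B k, u i t) h f)
    (hB : Pairwise (Disjoint on B)) (hmin : ∀ k, IsGoodMinimal u (B k)) {i j : ι}
    (hi : i ∉ Set.range h) (hj : j ∉ Set.range h) :
    ∑ t ∈ bundleUnion B f j, u i t ≤ ∑ t ∈ bundleUnion B f i, u i t ∨
      ∃ g ∈ bundleUnion B f j,
        ∑ t ∈ bundleUnion B f j, u i t - u i g ≤ ∑ t ∈ bundleUnion B f i, u i t := by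
  simp only [sum_bundleUnion hB]
  rcases hfair.ef1 i j hi hj with hle | ⟨k, -, rfl, hle⟩
  · exact .inl hle
  · rcases le_or_gt (∑ t ∈ B k, u i t) 0 with hk | hk
    · exact .inl ((le_sub_self_iff _).2 hk |>.trans hle)
    · obtain ⟨g, hg, hkg⟩ := (hmin k).exists_sum_le hk
      exact .inr ⟨g, mem_bundleUnion.2 ⟨k, rfl, hg⟩, (sub_le_sub_left hkg _).trans hle⟩

theorem isEF1
    (hfair : IsFairChoreAssignment (fun i (c : Z) => u i c) (fun i k => ∑ t ∈ B k, u i t) h f)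
    (hB : Pairwise (Disjoint on B)) (hBZ : ∀ k, Disjoint (B k) Z)
    (hmin : ∀ k, IsGoodMinimal u (B k))
    (hnonpos : ∀ c ∈ Z, ∀ i, ∀ T : Finset κ, ∑ t ∈ insert c (T.biUnion B), u i t ≤ 0) :
    IsEF1 u (bundleUnion (parcels Z B) (Sum.elim h f)) := by
  intro i j
  rcases eq_or_ne i j with rfl | hij
  · exact .inl le_rfl
  have hdisj := pairwise_disjoint_bundleUnion (pairwise_disjoint_parcels hB hBZ) (Sum.elim h f) hij
  have hchore (c : Z) : ∑ t ∈ bundleUnion (parcels Z B) (Sum.elim h f) (h c), u i t ≤ 0 := by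
    rw [bundleUnion_parcels_apply]
    exact hnonpos c c.2 i _
  by_cases hi : i ∈ Set.range h
  · obtain ⟨c, rfl⟩ := hi
    have hother : ∑ t ∈ bundleUnion (parcels Z B) (Sum.elim h f) j, u (h c) t ≤ 0 := by
      by_cases hj : j ∈ Set.range h
      · obtain ⟨c', rfl⟩ := hj
        exact hchore c'
      · rw [bundleUnion_parcels_of_notMem_range h f hj]
        exact hfair.sum_holder_nonpos hB c hj
    have hc : c.1 ∉ bundleUnion B f (h c) := fun hmem =>
      have ⟨k, _, hk⟩ := mem_bundleUnion.1 hmem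
      disjoint_left.1 (hBZ k) hk c.2
    refine .inr (exists_erase_le_of_le_sub hdisj
      (mem_bundleUnion.2 ⟨.inl c, rfl, mem_singleton_self _⟩) (hother.trans ?_))
    rw [bundleUnion_parcels_apply, sum_insert hc, add_sub_cancel_left]
    exact hfair.sum_own_nonneg hB (h c)
  · have hown := bundleUnion_parcels_of_notMem_range (B := B) h f hi
    by_cases hj : j ∈ Set.range h
    · obtain ⟨c, rfl⟩ := hj
      rw [hown]
      exact .inl ((hchore c).trans (hfair.sum_own_nonneg hB i))
    · have hother := bundleUnion_parcels_of_notMem_range (B := B) h f hj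
      rw [onFun, hown, hother] at hdisj
      rw [hown, hother]
      exact (hfair.ef1_bundleUnion hB hmin hi hj).imp_right fun ⟨_, hg, hle⟩ =>
        exists_erase_le_of_sub_le hdisj hg hle

end IsFairChoreAssignment

theorem exists_isAllocation_isEF1_isEnvyFreeable [Fintype ι] [Fintype I]
    (hB : Pairwise (Disjoint on B)) (hBZ : ∀ k, Disjoint (B k) Z)
    (hcover : univ.biUnion B ∪ Z = univ)
    (hmeta : ∀ k, IsMetaGood u (B k)) (hmin : ∀ k, IsGoodMinimal u (B k))
    (hcard : Z.card ≤ Fintype.card ι)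
    (hnonpos : ∀ c ∈ Z, ∀ i, ∀ T : Finset κ, ∑ t ∈ insert c (T.biUnion B), u i t ≤ 0) :
    ∃ A, IsAllocation A ∧ IsEF1 u A ∧ IsEnvyFreeable u A := by
  classical
  obtain ⟨h, f, hfair⟩ := exists_isFairChoreAssignment (C := Z) (by rwa [Fintype.card_coe])
    (fun i c => u i c) (v := fun i k => ∑ t ∈ B k, u i t) hmeta
  have hparcels_cover (t : I) : ∃ b, t ∈ parcels Z B b := by
    have ht : t ∈ univ.biUnion B ∪ Z := hcover ▸ mem_univ t
    simpa [parcels, or_comm] using ht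
  exact ⟨bundleUnion (parcels Z B) (Sum.elim h f),
    isAllocation_bundleUnion (pairwise_disjoint_parcels hB hBZ) hparcels_cover _,
    hfair.isEF1 hB hBZ hmin hnonpos, hfair.isEnvyFreeable hB hBZ⟩

end MainArgument

end FairDivision

open FairDivision

theorem ef1_envy_freeable_case_few_chores_general {ι κ I R : Type*} [Fintype ι] [Fintype κ]
    [Fintype I] [DecidableEq I] [AddCommGroup R] [LinearOrder R] [IsOrderedAddMonoid R]
    {u : ι → I → R} {Ms : κ → Finset I} {X Z : Finset I}
    (hMs_meta : ∀ k, IsMetaGood u (Ms k)) (hMs_disj : Pairwise (Disjoint on Ms))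
    (hMsX_disj : ∀ k, Disjoint (Ms k) X) (hMsZ_disj : ∀ k, Disjoint (Ms k) Z)
    (hXZ_disj : Disjoint X Z) (hcover : univ.biUnion Ms ∪ X ∪ Z = univ)
    (hX_goods : ∀ g ∈ X, ∃ i, 0 ≤ u i g) (hZ_card : Z.card ≤ Fintype.card ι)
    (hGoodMin : ∀ k, IsGoodMinimal u (Ms k))
    (hnonpos : ∀ c ∈ Z, ∀ i, ∀ (G : Finset I) (T : Finset κ), G ⊆ X →
      ∑ t ∈ insert c (G ∪ T.biUnion Ms), u i t ≤ 0) :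
    ∃ A, IsAllocation A ∧ IsEF1 u A ∧ IsEnvyFreeable u A := by
  classical
  let B := parcels X Ms
  have hbiUnion (T : Finset (X ⊕ κ)) :
      T.biUnion B = T.toLeft.map (Embedding.subtype _) ∪ T.toRight.biUnion Ms := by
    ext t
    simp [B, parcels]
  refine exists_isAllocation_isEF1_isEnvyFreeable (B := B) (Z := Z)
    (pairwise_disjoint_parcels hMs_disj hMsX_disj) ?_ ?_ ?_ ?_ hZ_card ?_
  · rintro (x | k)
    · exact disjoint_singleton_left.2 (disjoint_left.1 hXZ_disj x.2)
    · exact hMsZ_disj k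
  · rw [← hcover, hbiUnion, union_comm (univ.biUnion Ms)]
    ext t
    simp
  · rintro (x | k)
    · simpa [B, parcels, IsMetaGood] using hX_goods x x.2
    · exact hMs_meta k
  · rintro (x | k)
    · exact isGoodMinimal_singleton u x.1
    · exact hGoodMin k
  · intro c hc i T
    rw [hbiUnion]
    exact hnonpos c hc i _ _ (map_subtype_subset _)

/-- Case II.2: If the item set is partitioned into pairwise disjoint
good-minimal meta-goods `M_1, …, M_ℓ` (with pairwise disjoint supporter sets), a set `X` of
subjective goods, and a set `Ẑ` of objective chores with `1 ≤ |Ẑ| ≤ n − 1`, such that for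
every `c ∈ Ẑ`, every agent `i`, and every subcollection `S` of `X ∪ {M_1, …, M_ℓ}` one has
`u_i({c} ∪ ⋃S) < 0`, then an EF1 and envy-freeable allocation of the items exists. -/
theorem ef1_envy_freeable_case_few_chores
    (n : ℕ) (I : Type) [Fintype I] [DecidableEq I]
    (u : Fin n → I → ℝ)
    (ℓ : ℕ) (Ms : Fin ℓ → Finset I) (X Zh : Finset I)
    -- each M_j is a nonempty meta-good
    (hMs_ne : ∀ j, (Ms j).Nonempty)
    (hMs_meta : ∀ j, ∃ i : Fin n, 0 ≤ ∑ t ∈ Ms j, u i t)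
    -- the M_j, X, Ẑ are pairwise disjoint and partition the item set
    (hMs_disj : ∀ j k, j ≠ k → Disjoint (Ms j) (Ms k))
    (hMsX_disj : ∀ j, Disjoint (Ms j) X)
    (hMsZ_disj : ∀ j, Disjoint (Ms j) Zh)
    (hXZ_disj : Disjoint X Zh)
    (hcover : Finset.univ.biUnion Ms ∪ X ∪ Zh = Finset.univ)
    -- X consists of subjective goods
    (hX_goods : ∀ g ∈ X, ∃ i : Fin n, 0 ≤ u i g)
    -- Ẑ consists of objective chores, with 1 ≤ |Ẑ| ≤ n − 1
    (hZ_chores : ∀ c ∈ Zh, ∀ i : Fin n, u i c < 0)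
    (hZ_card : 1 ≤ Zh.card ∧ Zh.card ≤ n - 1)
    -- supporter sets are pairwise disjoint
    (hSupp : ∀ j k, j ≠ k → ∀ i : Fin n,
      0 ≤ (∑ t ∈ Ms j, u i t) → ¬ (0 ≤ ∑ t ∈ Ms k, u i t))
    -- each M_j is good-minimal
    (hGoodMin : ∀ j, ∀ (r : Fin n) (g : I), g ∈ Ms j → 0 ≤ u r g →
      (∑ t ∈ (Ms j).erase g, u r t) ≤ 0)
    -- for every chore c ∈ Ẑ, agent i, and subcollection S of X ∪ {M_1, …, M_ℓ},
    -- u_i({c} ∪ ⋃S) < 0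
    (hP3 : ∀ c ∈ Zh, ∀ i : Fin n, ∀ (G : Finset I) (T : Finset (Fin ℓ)), G ⊆ X →
      (∑ t ∈ insert c (G ∪ T.biUnion Ms), u i t) < 0) :
    ∃ A : Fin n → Finset I,
      (∀ i j, i ≠ j → Disjoint (A i) (A j)) ∧
      (Finset.univ.biUnion A = Finset.univ) ∧
      -- EF1
      (∀ i j : Fin n,
        (∑ t ∈ A i, u i t) ≥ (∑ t ∈ A j, u i t) ∨
          ∃ t ∈ A i ∪ A j,
            (∑ s ∈ (A i).erase t, u i s) ≥ ∑ s ∈ (A j).erase t, u i s) ∧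
      -- envy-freeable
      (∃ p : Fin n → ℝ, (∀ i, 0 ≤ p i) ∧
        ∀ i j : Fin n, (∑ t ∈ A i, u i t) + p i ≥ (∑ t ∈ A j, u i t) + p j) := by
  obtain ⟨A, hA, hEF1, hEF⟩ := ef1_envy_freeable_case_few_chores_general hMs_meta hMs_disj
    hMsX_disj hMsZ_disj hXZ_disj hcover hX_goods (by rw [Fintype.card_fin]; omega)
    hGoodMin fun c hc i G T hG => (hP3 c hc i G T hG).le
  exact ⟨A, fun _ _ hij => hA.disjoint hij, hA.biUnion_eq_univ, hEF1, hEF⟩
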